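/- Let S = Alt(7). Then P_S(2) = 229/315, where P_S(2) is the probability that two uniformly random elements of Alt(7) generate Alt(7). -/

import Mathlib

open Subgroup

/-- `P_S(2)`: the probability that two uniformly random elements of `S` generate `S`. -/
noncomputable def genProb2 (S : Type*) [Group S] : ℝ :=
  (Nat.card {v : S × S // Subgroup.closure {v.1, v.2} = ⊤} : ℝ) / (Nat.card S : ℝ) ^ 2

/-!
A transitive subgroup of `Alt(7)` contains a Sylow 7-subgroup, so up to conjugacy it contains the
translations of `ℤ/7`. A subgroup containing the translations is `Alt(7)` unless it preserves one
of the two Fano planes whose lines are the translates of `{1, 2, 4}` and of `{6, 5, 3}`: otherwise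
it contains a 3-cycle, by a finite check, and Jordan's theorem applies. Hence the generating pairs
are the transitive pairs that have no conjugate in either of the two plane stabilizers, which are
copies of `PSL(2, 7)`. Both stabilizers contain the normalizer of the translations, so by Sylow's
theorem a subgroup that contains the translations and has a conjugate in a stabilizer already lies
in it; this makes the pairs with a conjugate in a stabilizer countable by inclusion-exclusion. The
transitive pairs are counted by a recursion on the orbit of a point, which has to be run for all
four sign characters in order to single out the even pairs.
-/

open Equiv MulAction Finset
open scoped Pointwise

section TransitivePairs

variable {G α : Type*} [Group G] [MulAction G α]

/-- The orbit of `a` under the subgroup generated by a pair of group elements. -/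
def pairOrbit (p : G × G) (a : α) : Set α :=
  orbit (closure {p.1, p.2}) a

/-- The pairs `(x, y)` in a group acting on `α` such that `⟨x, y⟩` is transitive on `α`. -/
def transitivePairs (G α : Type*) [Group G] [MulAction G α] : Set (G × G) :=
  {p | IsPretransitive (closure {p.1, p.2}) α}

lemma mem_pairOrbit_self (p : G × G) (a : α) : a ∈ pairOrbit p a :=
  mem_orbit_self a

lemma pairOrbit_subset {p : G × G} {S : Set α} {a : α} (ha : a ∈ S)
    (h₁ : ∀ b, p.1 • b ∈ S ↔ b ∈ S) (h₂ : ∀ b, p.2 • b ∈ S ↔ b ∈ S) : pairOrbit p a ⊆ S := by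
  have hp : closure {p.1, p.2} ≤ stabilizer G S :=
    (closure_le _).2 <| Set.insert_subset (mem_stabilizer_set.2 h₁) <|
      Set.singleton_subset_iff.2 (mem_stabilizer_set.2 h₂)
  rintro _ ⟨⟨g, hg⟩, rfl⟩
  exact (mem_stabilizer_set.1 (hp hg) a).2 ha

lemma smul_mem_pairOrbit_iff {p : G × G} {g : G} (hg : g ∈ closure {p.1, p.2}) (a b : α) :
    g • b ∈ pairOrbit p a ↔ b ∈ pairOrbit p a := by
  rw [pairOrbit, ← orbit_eq_iff, ← orbit_eq_iff,
    ← orbit_smul (⟨g, hg⟩ : closure {p.1, p.2}) b]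
  rfl

lemma fst_smul_mem_pairOrbit_iff (p : G × G) (a b : α) :
    p.1 • b ∈ pairOrbit p a ↔ b ∈ pairOrbit p a :=
  smul_mem_pairOrbit_iff (subset_closure (by simp)) a b

lemma snd_smul_mem_pairOrbit_iff (p : G × G) (a b : α) :
    p.2 • b ∈ pairOrbit p a ↔ b ∈ pairOrbit p a :=
  smul_mem_pairOrbit_iff (subset_closure (by simp)) a b

lemma mem_transitivePairs_iff_pairOrbit_eq_univ {p : G × G} (a : α) :
    p ∈ transitivePairs G α ↔ pairOrbit p a = Set.univ :=
  isPretransitive_iff_orbit_eq_univ a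

lemma mem_transitivePairs_iff_forall_invariant {p : G × G} :
    p ∈ transitivePairs G α ↔ ∀ S : Set α,
      (∀ i, p.1 • i ∈ S ↔ i ∈ S) → (∀ i, p.2 • i ∈ S ↔ i ∈ S) → S = ∅ ∨ S = Set.univ := by
  constructor
  · refine fun hp S h₁ h₂ => S.eq_empty_or_nonempty.imp_right fun ⟨a, ha⟩ => ?_
    rw [mem_transitivePairs_iff_pairOrbit_eq_univ a] at hp
    exact Set.univ_subset_iff.1 (hp ▸ pairOrbit_subset ha h₁ h₂)
  · refine fun h => ⟨fun a b => mem_orbit_iff.1 ?_⟩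
    obtain h₀ | h₀ := h (pairOrbit p a)
      (fst_smul_mem_pairOrbit_iff p a) (snd_smul_mem_pairOrbit_iff p a)
    · exact absurd (mem_pairOrbit_self p a) (h₀ ▸ Set.notMem_empty a)
    · exact (h₀ ▸ Set.mem_univ b : b ∈ pairOrbit p a)

lemma mem_transitivePairs_congr {H β : Type*} [Group H] [MulAction H β] (e : α ≃ β)
    {p : G × G} {q : H × H} (h₁ : ∀ a, e (p.1 • a) = q.1 • e a)
    (h₂ : ∀ a, e (p.2 • a) = q.2 • e a) : p ∈ transitivePairs G α ↔ q ∈ transitivePairs H β := by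
  simp only [mem_transitivePairs_iff_forall_invariant]
  refine (Equiv.Set.congr e).forall_congr fun S => ?_
  simp [← e.forall_congr_right, ← h₁, ← h₂, Set.eq_univ_iff_forall]

lemma mem_transitivePairs_subgroup_iff {H : Subgroup G} {x y : H} :
    (x, y) ∈ transitivePairs H α ↔ ((x : G), (y : G)) ∈ transitivePairs G α :=
  mem_transitivePairs_congr (.refl α) (fun _ => rfl) fun _ => rfl

lemma conj_smul_mem_transitivePairs_iff (g : ConjAct G) {p : G × G} :
    g • p ∈ transitivePairs G α ↔ p ∈ transitivePairs G α :=
  (mem_transitivePairs_congr (toPerm (ConjAct.ofConjAct g))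
    (fun a => by simp [ConjAct.smul_def, mul_smul])
    fun a => by simp [ConjAct.smul_def, mul_smul]).symm

end TransitivePairs

section Gluing

variable {α : Type*} (P : α → Prop) [DecidablePred P]

/-- Gluing two permutations of `{a // P a}` and two of its complement to two permutations. -/
def glue (q : (Perm {a // P a} × Perm {a // P a}) × (Perm {a // ¬P a} × Perm {a // ¬P a})) :
    Perm α × Perm α :=
  (Perm.subtypeCongr q.1.1 q.2.1, Perm.subtypeCongr q.1.2 q.2.2)

lemma glue_injective : (glue P).Injective := by
  rintro ⟨⟨x, y⟩, x', y'⟩ ⟨⟨z, t⟩, z', t'⟩ h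
  have h₁ := @Perm.subtypeCongrHom_injective _ P _ (x, x') (z, z') (congrArg Prod.fst h)
  have h₂ := @Perm.subtypeCongrHom_injective _ P _ (y, y') (t, t') (congrArg Prod.snd h)
  simp_all

variable {P}

lemma mem_range_glue {p : Perm α × Perm α} (h₁ : ∀ b, P (p.1 b) ↔ P b)
    (h₂ : ∀ b, P (p.2 b) ↔ P b) : p ∈ Set.range (glue P) := by
  refine ⟨((p.1.subtypePerm h₁, p.2.subtypePerm h₂),
    (p.1.subtypePerm fun b => not_congr (h₁ b), p.2.subtypePerm fun b => not_congr (h₂ b))), ?_⟩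
  ext b <;> by_cases hb : P b <;> simp [glue, hb]

lemma subtypeCongr_apply_mem_image_val_iff {x : Perm {a // P a}} {T : Set {a // P a}}
    (hT : ∀ b, x b ∈ T ↔ b ∈ T) (x' : Perm {a // ¬P a}) (b : α) :
    x.subtypeCongr x' b ∈ Subtype.val '' T ↔ b ∈ Subtype.val '' T := by
  by_cases hb : P b
  · simpa [hb, (x ⟨b, hb⟩).2] using hT ⟨b, hb⟩
  · simp [hb, (x' ⟨b, hb⟩).2]

lemma pairOrbit_glue
    (q : (Perm {a // P a} × Perm {a // P a}) × (Perm {a // ¬P a} × Perm {a // ¬P a}))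
    (a : {a // P a}) : pairOrbit (glue P q) (a : α) = Subtype.val '' pairOrbit q.1 a := by
  apply Set.Subset.antisymm
  · exact pairOrbit_subset ⟨a, mem_pairOrbit_self q.1 a, rfl⟩
      (subtypeCongr_apply_mem_image_val_iff (fst_smul_mem_pairOrbit_iff q.1 a) _)
      (subtypeCongr_apply_mem_image_val_iff (snd_smul_mem_pairOrbit_iff q.1 a) _)
  · rw [Set.image_subset_iff]
    refine pairOrbit_subset (mem_pairOrbit_self _ _) (fun b => ?_) fun b => ?_
    · simpa [glue] using fst_smul_mem_pairOrbit_iff (glue P q) (a : α) b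
    · simpa [glue] using snd_smul_mem_pairOrbit_iff (glue P q) (a : α) b

lemma pairOrbit_glue_eq_setOf_iff
    (q : (Perm {a // P a} × Perm {a // P a}) × (Perm {a // ¬P a} × Perm {a // ¬P a}))
    (a : {a // P a}) :
    pairOrbit (glue P q) (a : α) = {b | P b} ↔
      q.1 ∈ transitivePairs (Perm {a // P a}) {a // P a} := by
  rw [pairOrbit_glue, mem_transitivePairs_iff_pairOrbit_eq_univ a, ← Set.image_eq_image
    Subtype.val_injective, Set.image_univ, Subtype.range_coe_subtype]

end Gluing

section Weights

variable {α β : Type*} [Fintype α] [DecidableEq α] [Fintype β] [DecidableEq β]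
variable (χ ψ : ℤˣ →* ℤ)

/-- The value of the character `(χ ∘ sign, ψ ∘ sign)` of `Perm α × Perm α` at a pair. Averaging
over `χ, ψ ∈ {1, sign}` singles out the pairs of even permutations. -/
def signWeight (p : Perm α × Perm α) : ℤ := χ (Perm.sign p.1) * ψ (Perm.sign p.2)

lemma signWeight_permCongr (e : α ≃ β) (p : Perm α × Perm α) :
    signWeight χ ψ (e.permCongr p.1, e.permCongr p.2) = signWeight χ ψ p := by
  simp [signWeight, Perm.sign_permCongr]

lemma signWeight_glue (P : α → Prop) [DecidablePred P]
    (q : (Perm {a // P a} × Perm {a // P a}) × (Perm {a // ¬P a} × Perm {a // ¬P a})) :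
    signWeight χ ψ (glue P q) = signWeight χ ψ q.1 * signWeight χ ψ q.2 := by
  simp only [signWeight, glue, Perm.sign_subtypeCongr, map_mul]
  ring

/-- The sum of `signWeight` over all pairs of permutations of `n` points. -/
def totalWeight (n : ℕ) : ℤ :=
  ∑ p : Perm (Fin n) × Perm (Fin n), signWeight χ ψ p

open scoped Classical in
/-- The sum of `signWeight` over the pairs of permutations of `n` points generating a transitive
group. -/
noncomputable def transitiveWeight (n : ℕ) : ℤ :=
  ∑ p : Perm (Fin n) × Perm (Fin n) with p ∈ transitivePairs (Perm (Fin n)) (Fin n),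
    signWeight χ ψ p

lemma sum_signWeight_eq_totalWeight {n : ℕ} (h : Fintype.card α = n) :
    ∑ p : Perm α × Perm α, signWeight χ ψ p = totalWeight χ ψ n := by
  let e := Fintype.equivFinOfCardEq h
  exact sum_equiv (e.permCongr.prodCongr e.permCongr) (by simp)
    fun p _ => (signWeight_permCongr χ ψ e p).symm

open scoped Classical in
lemma sum_signWeight_eq_transitiveWeight {n : ℕ} (h : Fintype.card α = n) :
    ∑ p : Perm α × Perm α with p ∈ transitivePairs (Perm α) α, signWeight χ ψ p =
      transitiveWeight χ ψ n := by
  let e := Fintype.equivFinOfCardEq h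
  refine sum_equiv (e.permCongr.prodCongr e.permCongr) (fun p => ?_)
    fun p _ => (signWeight_permCongr χ ψ e p).symm
  simpa using mem_transitivePairs_congr e (by simp) (by simp)

open scoped Classical in
lemma sum_signWeight_pairOrbit_eq {a : α} {B : Finset α} (ha : a ∈ B) :
    ∑ p : Perm α × Perm α with pairOrbit p a = B, signWeight χ ψ p =
      transitiveWeight χ ψ #B * totalWeight χ ψ (Fintype.card α - #B) := by
  rw [← sum_signWeight_eq_transitiveWeight χ ψ (Fintype.card_coe B),
    ← sum_signWeight_eq_totalWeight (α := {a // a ∉ B}) χ ψ (by simp [Fintype.card_subtype_compl]),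
    sum_mul_sum, ← sum_product']
  symm
  refine sum_nbij (glue (· ∈ B)) (fun q hq => ?_) (glue_injective _).injOn (fun p hp => ?_)
    fun q _ => by convert (signWeight_glue χ ψ _ q).symm
  · simpa using (pairOrbit_glue_eq_setOf_iff q ⟨a, ha⟩).2 (by simpa using hq)
  · replace hp : pairOrbit p a = B := by simpa using hp
    obtain ⟨q, rfl⟩ : p ∈ Set.range (glue (· ∈ B)) := mem_range_glue
      (fun b => by simpa [hp] using fst_smul_mem_pairOrbit_iff p a b)
      (fun b => by simpa [hp] using snd_smul_mem_pairOrbit_iff p a b)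
    exact ⟨q, by simpa using (pairOrbit_glue_eq_setOf_iff q ⟨a, ha⟩).1 hp, rfl⟩

/-- The `k`-th summand comes from the pairs for which the orbit of `0` has `k + 1` points. -/
lemma totalWeight_succ (n : ℕ) :
    totalWeight χ ψ (n + 1) = ∑ k ∈ range (n + 1),
      n.choose k * (transitiveWeight χ ψ (k + 1) * totalWeight χ ψ (n - k)) := by
  classical
  let f (B : Finset (Fin (n + 1))) : ℤ :=
    ∑ p : Perm (Fin (n + 1)) × Perm (Fin (n + 1)) with pairOrbit p (0 : Fin (n + 1)) = B,
      signWeight χ ψ p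
  have h_fiber : totalWeight χ ψ (n + 1) = ∑ B, f B := by
    rw [totalWeight, ← sum_fiberwise univ fun p => (pairOrbit p (0 : Fin (n + 1))).toFinset]
    simp only [f, ← Set.toFinset_inj, toFinset_coe]
  have h_zero (B : Finset (Fin (n + 1))) (hB : 0 ∉ B) : f B = 0 := by
    refine sum_eq_zero fun p hp => absurd (mem_pairOrbit_self p (0 : Fin (n + 1))) ?_
    rwa [(mem_filter.1 hp).2, mem_coe]
  have h_insert (B : Finset (Fin (n + 1))) (hB : 0 ∉ B) : f (insert 0 B) =
      transitiveWeight χ ψ (#B + 1) * totalWeight χ ψ (n - #B) := by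
    simp [f, sum_signWeight_pairOrbit_eq χ ψ (mem_insert_self 0 B), card_insert_of_notMem hB]
  have h_univ : (univ : Finset (Finset (Fin (n + 1)))) = (insert 0 ({0}ᶜ : Finset _)).powerset := by
    simp
  have h_notMem {B : Finset (Fin (n + 1))} (hB : B ∈ ({0}ᶜ : Finset _).powerset) : 0 ∉ B :=
    fun h => by simpa using mem_powerset.1 hB h
  rw [h_fiber, h_univ, sum_powerset_insert (by simp),
    sum_eq_zero fun B hB => h_zero B (h_notMem hB), zero_add,
    sum_congr rfl fun B hB => h_insert B (h_notMem hB),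
    sum_powerset_apply_card (fun k => transitiveWeight χ ψ (k + 1) * totalWeight χ ψ (n - k))]
  simp [card_compl]

lemma totalWeight_eq_mul (n : ℕ) : totalWeight χ ψ n =
    (∑ x : Perm (Fin n), χ (Perm.sign x)) * ∑ y : Perm (Fin n), ψ (Perm.sign y) := by
  simp only [totalWeight, signWeight, Fintype.sum_prod_type, sum_mul_sum]

lemma totalWeight_one_one (n : ℕ) : totalWeight 1 1 n = (n.factorial : ℤ) ^ 2 := by
  simp [totalWeight_eq_mul, Fintype.card_perm, sq]

variable {χ ψ}

lemma totalWeight_of_le_one {n : ℕ} (hn : n ≤ 1) : totalWeight χ ψ n = 1 := by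
  interval_cases n <;> simp [totalWeight_eq_mul]

lemma sum_sign_eq_zero (hχ : χ ≠ 1) {n : ℕ} (hn : 2 ≤ n) :
    ∑ x : Perm (Fin n), χ (Perm.sign x) = 0 := by
  have := Fin.nontrivial_iff_two_le.2 hn
  refine sum_hom_units_eq_zero (χ.comp Perm.sign) fun h => hχ <| MonoidHom.ext fun u => ?_
  obtain ⟨x, rfl⟩ := Perm.sign_surjective (Fin n) u
  exact DFunLike.congr_fun h x

lemma totalWeight_eq_zero (h : χ ≠ 1 ∨ ψ ≠ 1) {n : ℕ} (hn : 2 ≤ n) : totalWeight χ ψ n = 0 := by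
  rw [totalWeight_eq_mul]
  exact mul_eq_zero.2 <| h.imp (sum_sign_eq_zero · hn) (sum_sign_eq_zero · hn)

lemma transitiveWeight_succ (h : χ ≠ 1 ∨ ψ ≠ 1) (n : ℕ) :
    transitiveWeight χ ψ (n + 1) = (-1) ^ n * n.factorial := by
  induction n with
  | zero => simpa [totalWeight_of_le_one] using (totalWeight_succ χ ψ 0).symm
  | succ n ih =>
    have h_rec := totalWeight_succ χ ψ (n + 1)
    rw [totalWeight_eq_zero h (by lia), sum_range_succ, sum_range_succ, sum_eq_zero fun k hk => ?_,
      totalWeight_of_le_one (by lia), totalWeight_of_le_one (by lia), ih] at h_rec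
    · simp only [Nat.choose_succ_self_right, Nat.choose_self] at h_rec
      rw [Nat.factorial_succ, pow_succ]
      push_cast at h_rec ⊢
      linarith
    · have := mem_range.1 hk
      rw [totalWeight_eq_zero h (by lia)]
      simp

lemma transitiveWeight_one_one_succ (n : ℕ) :
    transitiveWeight 1 1 (n + 1) = ((n + 1).factorial : ℤ) ^ 2 -
      ∑ k ∈ range n, n.choose k * (transitiveWeight 1 1 (k + 1) * ((n - k).factorial : ℤ) ^ 2) := by
  rw [← totalWeight_one_one (n + 1), totalWeight_succ, sum_range_succ]
  simp [totalWeight_one_one]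

lemma transitiveWeight_one_one_seven : transitiveWeight 1 1 7 = 20946960 := by
  have h₁ : transitiveWeight 1 1 1 = 1 := by simp [transitiveWeight_one_one_succ 0]
  have h₂ : transitiveWeight 1 1 2 = 3 := by
    simp [transitiveWeight_one_one_succ 1, Nat.factorial, h₁]
  have h₃ : transitiveWeight 1 1 3 = 26 := by
    simp [transitiveWeight_one_one_succ 2, sum_range_succ, Nat.factorial, h₁, h₂]
  have h₄ : transitiveWeight 1 1 4 = 426 := by
    simp [transitiveWeight_one_one_succ 3, sum_range_succ, Nat.factorial, Nat.choose, h₁, h₂, h₃]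
  have h₅ : transitiveWeight 1 1 5 = 11064 := by
    simp [transitiveWeight_one_one_succ 4, sum_range_succ, Nat.factorial, Nat.choose, h₁, h₂, h₃,
      h₄]
  have h₆ : transitiveWeight 1 1 6 = 413640 := by
    simp [transitiveWeight_one_one_succ 5, sum_range_succ, Nat.factorial, Nat.choose, h₁, h₂, h₃,
      h₄, h₅]
  simp [transitiveWeight_one_one_succ 6, sum_range_succ, Nat.factorial, Nat.choose, h₁, h₂, h₃, h₄,
    h₅, h₆]

end Weights

section EvenPairs

lemma coeHom_ne_one : Units.coeHom ℤ ≠ 1 := fun h => by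
  simpa using DFunLike.congr_fun h (-1)

open scoped Classical in
lemma ncard_transitivePairs_alternatingGroup (n : ℕ) :
    (transitivePairs (alternatingGroup (Fin n)) (Fin n)).ncard =
      #{p : Perm (Fin n) × Perm (Fin n) | p ∈ transitivePairs (Perm (Fin n)) (Fin n) ∧
        Perm.sign p.1 = 1 ∧ Perm.sign p.2 = 1} := by
  rw [← Set.ncard_coe_finset, ← Set.ncard_image_of_injective _
    (Subtype.val_injective.prodMap Subtype.val_injective)]
  congr 1
  ext ⟨x, y⟩
  simp [mem_transitivePairs_subgroup_iff, and_assoc, and_comm, and_left_comm]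

lemma four_mul_ite_even {n : ℕ} (p : Perm (Fin n) × Perm (Fin n)) :
    (4 * if Perm.sign p.1 = 1 ∧ Perm.sign p.2 = 1 then 1 else 0 : ℤ) =
      signWeight 1 1 p + signWeight 1 (Units.coeHom ℤ) p + signWeight (Units.coeHom ℤ) 1 p +
        signWeight (Units.coeHom ℤ) (Units.coeHom ℤ) p := by
  obtain h₁ | h₁ := Int.units_eq_one_or (Perm.sign p.1) <;>
    obtain h₂ | h₂ := Int.units_eq_one_or (Perm.sign p.2) <;> simp [signWeight, h₁, h₂]

lemma four_mul_ncard_transitivePairs_alternatingGroup (n : ℕ) :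
    (4 * (transitivePairs (alternatingGroup (Fin (n + 1))) (Fin (n + 1))).ncard : ℤ) =
      transitiveWeight 1 1 (n + 1) + 3 * ((-1) ^ n * n.factorial) := by
  classical
  rw [ncard_transitivePairs_alternatingGroup, ← filter_filter, card_filter, Nat.cast_sum, mul_sum]
  simp only [Nat.cast_ite, Nat.cast_one, Nat.cast_zero, four_mul_ite_even, sum_add_distrib]
  change transitiveWeight _ _ _ + transitiveWeight _ _ _ + transitiveWeight _ _ _ +
    transitiveWeight _ _ _ = _
  rw [transitiveWeight_succ (.inr coeHom_ne_one), transitiveWeight_succ (.inl coeHom_ne_one),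
    transitiveWeight_succ (.inl coeHom_ne_one)]
  ring

lemma ncard_transitivePairs_alternatingGroup_seven :
    (transitivePairs (alternatingGroup (Fin 7)) (Fin 7)).ncard = 5237280 := by
  have h := four_mul_ncard_transitivePairs_alternatingGroup 6
  rw [transitiveWeight_one_one_seven, show Nat.factorial 6 = 720 from rfl] at h
  lia

end EvenPairs

section Sylow

lemma conjAct_smul_le_iff_le {G : Type*} [Group G] {H K : Subgroup G} {g : ConjAct G}
    (hg : ConjAct.ofConjAct g ∈ K) : g • H ≤ K ↔ H ≤ K := by
  have hgK : g • K = K := conj_smul_eq_self_of_mem hg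
  conv_lhs => rw [← hgK, pointwise_smul_le_pointwise_smul_iff]

variable {G : Type*} [Group G] [Finite G] {p : ℕ} [Fact p.Prime]

lemma exists_sylow_le {H : Subgroup G}
    (hH : p ^ (Nat.card G).factorization p ∣ Nat.card H) : ∃ Q : Sylow p G, ↑Q ≤ H := by
  obtain ⟨K, hK⟩ := Sylow.exists_subgroup_card_pow_prime p hH
  exact ⟨.ofCard (K.map H.subtype) (by rw [Subgroup.card_subtype, hK]), map_subtype_le K⟩

lemma exists_mem_smul_eq_of_le {K : Subgroup G} {P Q : Sylow p G} (hP : P ≤ K) (hQ : Q ≤ K) :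
    ∃ k ∈ K, k • P = Q := by
  obtain ⟨k, hk⟩ := exists_smul_eq K (P.subtype hP) (Q.subtype hQ)
  rw [Sylow.smul_subtype] at hk
  exact ⟨k, k.2, Sylow.subtype_injective hk⟩

lemma mem_of_sylow_smul_le {K : Subgroup G} {P Q : Sylow p G} (hK : normalizer (P : Set G) ≤ K)
    {g : G} (hQ : Q ≤ K) (hg : ↑(g • Q) ≤ K) : g ∈ K := by
  have hP : P ≤ K := le_normalizer.trans hK
  obtain ⟨k, hk, rfl⟩ := exists_mem_smul_eq_of_le hP hQ
  obtain ⟨l, hl, h⟩ := exists_mem_smul_eq_of_le hP hg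
  have : l⁻¹ * g * k ∈ K := hK <| Sylow.smul_eq_iff_mem_normalizer.1 <| by
    rw [mul_smul, mul_smul, ← h, inv_smul_smul]
  simpa [mul_assoc, K.mul_mem_cancel_left, K.mul_mem_cancel_right, hk, hl] using this

lemma ofConjAct_mem_of_smul_le {H K : Subgroup G} {P Q : Sylow p G}
    (hK : normalizer (P : Set G) ≤ K) (hQH : Q ≤ H) (hQK : Q ≤ K) {g : ConjAct G}
    (hg : g • H ≤ K) : ConjAct.ofConjAct g ∈ K :=
  mem_of_sylow_smul_le hK hQK (le_trans (pointwise_smul_le_pointwise_smul_iff.2 hQH) hg)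

end Sylow

section DoubleCounting

variable {M X : Type*} [Group M] [MulAction M X]

lemma ncard_mul_ncard_setOf_exists_smul_mem [Finite M] [Finite X] {Y : Set X} {K : Set M}
    (h : ∀ y ∈ Y, ∀ g : M, g • y ∈ Y ↔ g ∈ K) :
    K.ncard * {x : X | ∃ g : M, g • x ∈ Y}.ncard = Nat.card M * Y.ncard := by
  classical
  have := Fintype.ofFinite M
  have := Fintype.ofFinite X
  have h_below (x : X) : #{g : M | g • x ∈ Y} = if ∃ g : M, g • x ∈ Y then K.ncard else 0 := by
    split_ifs with hx
    · obtain ⟨g, hg⟩ := hx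
      rw [← Set.ncard_coe_finset, ← Set.ncard_image_of_injective _ (mul_left_injective g⁻¹)]
      congr 1
      ext m
      simp [← h _ hg, smul_smul]
    · simpa [filter_eq_empty_iff] using hx
  have h_above (g : M) : #{x : X | g • x ∈ Y} = Y.ncard := by
    rw [← Set.ncard_coe_finset, ← Set.ncard_image_of_injective Y (MulAction.injective g⁻¹)]
    congr 1
    ext x
    simp [Set.mem_inv_smul_set_iff]
  have h_count := sum_card_bipartiteAbove_eq_sum_card_bipartiteBelow (s := (univ : Finset M))
    (t := (univ : Finset X)) fun g x => g • x ∈ Y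
  simp only [bipartiteAbove, bipartiteBelow, h_above, h_below] at h_count
  rw [sum_const, ← sum_filter, sum_const, card_univ, ← Nat.card_eq_fintype_card, smul_eq_mul,
    smul_eq_mul, ← Set.ncard_coe_finset, coe_filter_univ] at h_count
  rw [mul_comm, h_count]

end DoubleCounting

section ConjugatePairs

variable {G α : Type*} [Group G] [MulAction G α]

lemma closure_smul_pair (g : ConjAct G) (q : G × G) :
    closure {(g • q).1, (g • q).2} = g • closure {q.1, q.2} := by
  rw [smul_closure, Set.smul_set_insert, Set.smul_set_singleton, Prod.smul_fst, Prod.smul_snd]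

/-- The pairs in `K` that generate a transitive group. -/
def transitivePairsIn (α : Type*) [MulAction G α] (K : Subgroup G) : Set (G × G) :=
  {q ∈ transitivePairs G α | closure {q.1, q.2} ≤ K}

/-- The pairs generating a transitive group that has a conjugate inside `K`. -/
def transitivePairsConj (α : Type*) [MulAction G α] (K : Subgroup G) : Set (G × G) :=
  {q | ∃ g : ConjAct G, g • q ∈ transitivePairsIn α K}

lemma smul_mem_transitivePairsConj_iff (g : ConjAct G) {K : Subgroup G} {q : G × G} :
    g • q ∈ transitivePairsConj α K ↔ q ∈ transitivePairsConj α K := by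
  simp only [transitivePairsConj, Set.mem_ofPred_eq, smul_smul]
  exact (Equiv.mulRight g).exists_congr fun _ => Iff.rfl

lemma transitivePairsConj_subset {K : Subgroup G} :
    transitivePairsConj α K ⊆ transitivePairs G α :=
  fun _ ⟨g, hg⟩ => (conj_smul_mem_transitivePairs_iff g).1 hg.1

lemma exists_sylow_le_closure [Finite G] [Fact (Nat.card α).Prime]
    (hG : (Nat.card G).factorization (Nat.card α) = 1)
    {q : G × G} (hq : q ∈ transitivePairs G α) :
    ∃ Q : Sylow (Nat.card α) G, ↑Q ≤ closure {q.1, q.2} := by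
  have : IsPretransitive (closure {q.1, q.2}) α := hq
  obtain ⟨a⟩ := (Nat.card_pos_iff.1 (Fact.out : (Nat.card α).Prime).pos).1
  refine exists_sylow_le ?_
  rw [hG, pow_one, ← index_stabilizer_of_transitive (closure {q.1, q.2}) a]
  exact index_dvd_card _

variable [Finite G] [Fact (Nat.card α).Prime] {P : Sylow (Nat.card α) G} {K L : Subgroup G}

lemma card_mul_ncard_transitivePairsConj (hG : (Nat.card G).factorization (Nat.card α) = 1)
    (hK : normalizer (P : Set G) ≤ K) :
    Nat.card K * (transitivePairsConj α K).ncard = Nat.card G * (transitivePairsIn α K).ncard := by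
  have : Finite (ConjAct G) := ‹Finite G›
  refine ncard_mul_ncard_setOf_exists_smul_mem (M := ConjAct G)
    (K := (K : Set G)) fun q ⟨hq, hqK⟩ g => ?_
  obtain ⟨Q, hQ⟩ := exists_sylow_le_closure hG hq
  rw [transitivePairsIn, Set.mem_sep_iff, conj_smul_mem_transitivePairs_iff, closure_smul_pair,
    and_iff_right hq]
  exact ⟨ofConjAct_mem_of_smul_le hK hQ (hQ.trans hqK),
    fun hg => (conjAct_smul_le_iff_le hg).2 hqK⟩

lemma mem_transitivePairsConj_iff_le (hK : normalizer (P : Set G) ≤ K) {q : G × G}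
    (hq : q ∈ transitivePairs G α) (hP : P ≤ closure {q.1, q.2}) :
    q ∈ transitivePairsConj α K ↔ closure {q.1, q.2} ≤ K := by
  refine ⟨fun ⟨g, hg⟩ => ?_, fun h => ⟨1, by simpa using ⟨hq, h⟩⟩⟩
  have h := hg.2
  rw [closure_smul_pair] at h
  exact (conjAct_smul_le_iff_le (ofConjAct_mem_of_smul_le hK hP (le_normalizer.trans hK) h)).1 h

lemma exists_smul_sylow_le_closure (hG : (Nat.card G).factorization (Nat.card α) = 1)
    (P : Sylow (Nat.card α) G) {q : G × G} (hq : q ∈ transitivePairs G α) :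
    ∃ g : ConjAct G, g • q ∈ transitivePairs G α ∧ P ≤ closure {(g • q).1, (g • q).2} := by
  obtain ⟨Q, hQ⟩ := exists_sylow_le_closure hG hq
  obtain ⟨g, rfl⟩ := exists_smul_eq G Q P
  refine ⟨ConjAct.toConjAct g, (conj_smul_mem_transitivePairs_iff _).2 hq, ?_⟩
  rw [closure_smul_pair]
  exact pointwise_smul_le_pointwise_smul_iff.2 hQ

lemma transitivePairsConj_inter (hG : (Nat.card G).factorization (Nat.card α) = 1)
    (hK : normalizer (P : Set G) ≤ K) (hL : normalizer (P : Set G) ≤ L) :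
    transitivePairsConj α K ∩ transitivePairsConj α L = transitivePairsConj α (K ⊓ L) := by
  ext q
  by_cases hq : q ∈ transitivePairs G α
  · obtain ⟨g, hgq, hP⟩ := exists_smul_sylow_le_closure hG P hq
    rw [Set.mem_inter_iff]
    simp only [← smul_mem_transitivePairsConj_iff g (q := q),
      mem_transitivePairsConj_iff_le hK hgq hP, mem_transitivePairsConj_iff_le hL hgq hP,
      mem_transitivePairsConj_iff_le (le_inf hK hL) hgq hP, le_inf_iff]
  · exact iff_of_false (fun h => hq (transitivePairsConj_subset h.1))
      fun h => hq (transitivePairsConj_subset h)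

lemma setOf_closure_eq_top [IsPretransitive G α]
    (hG : (Nat.card G).factorization (Nat.card α) = 1) (hK : normalizer (P : Set G) ≤ K)
    (hL : normalizer (P : Set G) ≤ L) (h : ∀ H : Subgroup G, P ≤ H → (H = ⊤ ↔ ¬H ≤ K ∧ ¬H ≤ L)) :
    {q : G × G | closure {q.1, q.2} = ⊤} =
      transitivePairs G α \ (transitivePairsConj α K ∪ transitivePairsConj α L) := by
  ext q
  by_cases hq : q ∈ transitivePairs G α
  · obtain ⟨g, hgq, hP⟩ := exists_smul_sylow_le_closure hG P hq
    have h_top : closure {(g • q).1, (g • q).2} = ⊤ ↔ closure {q.1, q.2} = ⊤ := by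
      have hg : g • (⊤ : Subgroup G) = ⊤ := normal_of_characteristic ⊤ |>.conjAct g
      rw [closure_smul_pair, ← smul_left_cancel_iff g⁻¹, inv_smul_smul, ← hg, inv_smul_smul, hg]
    rw [Set.mem_ofPred_eq, ← h_top, h _ hP, Set.mem_sdiff, Set.mem_union, not_or,
      ← smul_mem_transitivePairsConj_iff g (K := K), ← smul_mem_transitivePairsConj_iff g (K := L),
      mem_transitivePairsConj_iff_le hK hgq hP, mem_transitivePairsConj_iff_le hL hgq hP]
    exact (and_iff_right hq).symm
  · refine iff_of_false (fun h_top => hq ?_) fun h => hq h.1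
    rw [transitivePairs, Set.mem_ofPred_eq, h_top]
    exact ⟨fun a b => (exists_smul_eq G a b).elim fun g hg => ⟨⟨g, mem_top g⟩, hg⟩⟩

lemma ncard_setOf_closure_eq_top_add [IsPretransitive G α]
    (hG : (Nat.card G).factorization (Nat.card α) = 1) (hK : normalizer (P : Set G) ≤ K)
    (hL : normalizer (P : Set G) ≤ L) (h : ∀ H : Subgroup G, P ≤ H → (H = ⊤ ↔ ¬H ≤ K ∧ ¬H ≤ L)) :
    {q : G × G | closure {q.1, q.2} = ⊤}.ncard + (transitivePairsConj α K).ncard +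
        (transitivePairsConj α L).ncard =
      (transitivePairs G α).ncard + (transitivePairsConj α (K ⊓ L)).ncard := by
  rw [setOf_closure_eq_top hG hK hL h, ← transitivePairsConj_inter hG hK hL, add_assoc,
    ← Set.ncard_union_add_ncard_inter, ← add_assoc, Set.ncard_sdiff_add_ncard_of_subset
    (Set.union_subset transitivePairsConj_subset transitivePairsConj_subset)]

end ConjugatePairs

local notation "A₇" => alternatingGroup (Fin 7)

section FanoPlanes

/-- The translation `i ↦ i + b` of `ℤ/7`. -/
def translation (b : Fin 7) : A₇ :=
  ⟨Equiv.addRight b, Perm.mem_alternatingGroup.2 (by revert b; decide)⟩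

/-- The group of translations of `ℤ/7`. -/
def translations : Subgroup A₇ where
  carrier := Set.range translation
  mul_mem' := by
    rintro _ _ ⟨a, rfl⟩ ⟨b, rfl⟩
    exact ⟨b + a, by ext; simp [translation, add_assoc]⟩
  one_mem' := ⟨0, by ext; simp [translation]⟩
  inv_mem' := by
    rintro _ ⟨a, rfl⟩
    exact ⟨-a, by ext; simp [translation]⟩

/-- For `ε = ±1`, the third point on the line through `i` and `j` (and `i` if `i = j`) in the Fano
plane on `ℤ/7` whose lines are the translates of `ε • {1, 2, 4}`. -/
def fanoThird (ε i j : Fin 7) : Fin 7 := 4 * (i + j) - ε * (i - j) ^ 4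

/-- Preserving `fanoThird ε`; on permutations, being an automorphism of the Fano plane. -/
def IsFanoAut (ε : Fin 7) (f : Fin 7 → Fin 7) : Prop :=
  ∀ i j, f (fanoThird ε i j) = fanoThird ε (f i) (f j)

instance (ε : Fin 7) : DecidablePred (IsFanoAut ε) :=
  fun f => inferInstanceAs (Decidable (∀ i j, f (fanoThird ε i j) = fanoThird ε (f i) (f j)))

/-- The even automorphisms of the Fano plane whose lines are the translates of `ε • {1, 2, 4}`. -/
def fanoAut (ε : Fin 7) : Subgroup A₇ where
  carrier := {g | IsFanoAut ε g}
  mul_mem' {g h} hg hh i j := by simp [hh i j, hg (h.1 i) (h.1 j)]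
  one_mem' _ _ := rfl
  inv_mem' {g} hg i j := g.1.injective <| by simp [hg _ _]

/-- Evenness of a permutation, computed from its inversions so that the kernel can evaluate it. -/
abbrev IsEven {n : ℕ} (f : Fin n → Fin n) : Prop :=
  (∏ j, ∏ i < j, if f i < f j then 1 else -1 : ℤˣ) = 1

lemma mem_alternatingGroup_iff_isEven {n : ℕ} {g : Perm (Fin n)} :
    g ∈ alternatingGroup (Fin n) ↔ IsEven g := by
  rw [Perm.mem_alternatingGroup, Perm.sign_eq_prod_prod_Iio]

lemma translation_mem_fanoAut (ε b : Fin 7) : translation b ∈ fanoAut ε := by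
  have h : ∀ ε b i j : Fin 7, fanoThird ε i j + b = fanoThird ε (i + b) (j + b) := by
    decide +kernel
  exact h ε b

lemma affine_mem_fanoAut {ε : Fin 7} (hε : ε = 1 ∨ ε = -1) {g : A₇} {a b : Fin 7}
    (hg : ∀ i, g.1 i = i * a + b) : g ∈ fanoAut ε := by
  have h : ∀ a b, IsEven (fun i : Fin 7 => i * a + b) →
      IsFanoAut 1 (fun i => i * a + b) ∧ IsFanoAut (-1) fun i => i * a + b := by
    decide +kernel
  have hg' : ⇑g.1 = fun i => i * a + b := funext hg
  have h_aut := h a b (hg' ▸ mem_alternatingGroup_iff_isEven.1 g.2)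
  obtain rfl | rfl := hε
  · exact (hg' ▸ h_aut.1 : IsFanoAut 1 g.1)
  · exact (hg' ▸ h_aut.2 : IsFanoAut (-1) g.1)

lemma card_translations : Nat.card translations = Nat.card (Fin 7) := by
  refine Nat.card_range_of_injective fun a b h => ?_
  simpa [translation] using congrArg (fun g : A₇ => g.1 0) h

lemma natCard_alternatingGroup_seven : Nat.card A₇ = 2520 := by
  rw [nat_card_alternatingGroup]
  simp [Nat.factorial]

lemma factorization_card_alternatingGroup_seven :
    (Nat.card A₇).factorization (Nat.card (Fin 7)) = 1 := by
  rw [natCard_alternatingGroup_seven, show 2520 = 7 * 360 from rfl, Nat.card_fin,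
    Nat.factorization_mul_of_coprime (by norm_num)]
  simp [Nat.Prime.factorization_self (by norm_num : Nat.Prime 7),
    Nat.factorization_eq_zero_of_not_dvd (by norm_num : ¬7 ∣ 360)]

instance fact_card_fin_seven_prime : Fact (Nat.card (Fin 7)).Prime := ⟨by norm_num⟩

/-- `translations` as a Sylow 7-subgroup of `Alt(7)`. -/
noncomputable def translationsSylow : Sylow (Nat.card (Fin 7)) A₇ :=
  .ofCard translations (by
    rw [card_translations, factorization_card_alternatingGroup_seven, pow_one])

lemma normalizer_translations_le_fanoAut {ε : Fin 7} (hε : ε = 1 ∨ ε = -1) :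
    normalizer (translations : Set A₇) ≤ fanoAut ε := by
  intro g hg
  obtain ⟨a, ha⟩ := (mem_normalizer_iff.1 hg (translation 1)).1 ⟨1, rfl⟩
  have h_succ (i : Fin 7) : g.1 (i + 1) = g.1 i + a := by
    have := congrArg (fun h : A₇ => h.1 (g.1 i)) ha
    simpa [translation] using this.symm
  have h_distrib : ∀ i a b : Fin 7, i * a + b + a = (i + 1) * a + b := by decide
  refine affine_mem_fanoAut hε (a := a) (b := g.1 0) fun i => ?_
  induction i using Fin.induction with
  | zero => simp
  | succ i ih =>
    rw [← Fin.coeSucc_eq_succ, h_succ, ih]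
    exact h_distrib _ _ _

end FanoPlanes

section NormalizedPermutations

/-- The permutations of `ℤ/7` fixing `0`, as functions. -/
def normalizedPerms : List (Fin 7 → Fin 7) :=
  [1, 2, 3, 4, 5, 6].permutations'.map fun l i => (0 :: l).getD i 0

lemma getD_zero_cons_ofFn_succ {f : Fin 7 → Fin 7} (hf : f 0 = 0) :
    (fun i : Fin 7 => (0 :: List.ofFn fun j : Fin 6 => f j.succ).getD i 0) = f := by
  funext i
  cases i using Fin.cases with
  | zero => simp [hf]
  | succ i => fin_cases i <;> rfl

lemma mem_normalizedPerms {f : Fin 7 → Fin 7} :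
    f ∈ normalizedPerms ↔ f 0 = 0 ∧ f.Injective := by
  simp only [normalizedPerms, List.mem_map, List.mem_permutations']
  constructor
  · rintro ⟨l, hl, rfl⟩
    have h_nodup : (0 :: l).Nodup := (hl.cons 0).nodup_iff.2 (by decide)
    refine ⟨rfl, fun i j hij => Fin.ext ?_⟩
    have h_lt (i : Fin 7) : i.val < (0 :: l).length := by simp [hl.length_eq]
    dsimp only at hij
    rwa [List.getD_eq_getElem _ _ (h_lt i), List.getD_eq_getElem _ _ (h_lt j),
      h_nodup.getElem_inj_iff] at hij
  · rintro ⟨hf₀, hf⟩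
    refine ⟨List.ofFn fun j : Fin 6 => f j.succ, ?_, getD_zero_cons_ofFn_succ hf₀⟩
    have h_nodup : (List.ofFn fun j : Fin 6 => f j.succ).Nodup :=
      List.nodup_ofFn.2 (hf.comp (Fin.succ_injective 6))
    refine (List.subperm_of_subset h_nodup fun x hx => ?_).perm_of_length_le (by simp)
    obtain ⟨j, rfl⟩ := List.mem_ofFn.1 hx
    have h_ne : f j.succ ≠ 0 := hf₀ ▸ hf.ne (Fin.succ_ne_zero j)
    have : ∀ x : Fin 7, x ≠ 0 → x ∈ [1, 2, 3, 4, 5, 6] := by decide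
    exact this _ h_ne

lemma nodup_normalizedPerms : normalizedPerms.Nodup := by
  have h_perm : ([1, 2, 3, 4, 5, 6] : List (Fin 7)).permutations'.Nodup :=
    (List.permutations_perm_permutations' _).nodup_iff.1 (List.nodup_permutations _ (by decide))
  refine h_perm.map_on fun l hl l' hl' h => ?_
  rw [List.mem_permutations'] at hl hl'
  refine List.ext_getElem (hl.length_eq.trans hl'.length_eq.symm) fun i hi hi' => ?_
  have h_lt : i < 6 := by simpa [hl.length_eq] using hi
  have := congrFun h ⟨i + 1, Nat.succ_lt_succ h_lt⟩
  simpa [hi, hi'] using this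

end NormalizedPermutations

section Maximality

/-- The map underlying `translation i * y * translation j * y`, where `f` is the map of `y`. Unless
the even permutation `y` preserves one of the two Fano planes, the square of this map is a 3-cycle
for some `i` and `j`. -/
def translatedSquare (f : Fin 7 → Fin 7) (i j k : Fin 7) : Fin 7 := f (f k + j) + i

set_option maxRecDepth 100000 in
lemma isFanoAut_or_linear_or_threeCycle {f : Fin 7 → Fin 7} (hf₀ : f 0 = 0) (hf : f.Injective) :
    IsFanoAut 1 f ∨ IsFanoAut (-1) f ∨ (∀ k, f k = k * f 1) ∨
      ∃ i j, #{k | translatedSquare f i j (translatedSquare f i j k) ≠ k} = 3 := by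
  have h : normalizedPerms.all (fun f => IsFanoAut 1 f ∨ IsFanoAut (-1) f ∨
      (∀ k, f k = k * f 1) ∨
      ∃ i j, #{k | translatedSquare f i j (translatedSquare f i j k) ≠ k} = 3) = true := by
    decide +kernel
  exact of_decide_eq_true (List.all_eq_true.1 h f (mem_normalizedPerms.2 ⟨hf₀, hf⟩))

lemma exists_isThreeCycle_mem {H : Subgroup A₇} (hH : translations ≤ H) (h₁ : ¬H ≤ fanoAut 1)
    (h₂ : ¬H ≤ fanoAut (-1)) : ∃ g ∈ H, g.1.IsThreeCycle := by
  obtain ⟨y, hyH, hy⟩ := Set.not_subset.1 <|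
    (SubgroupClass.subset_union (H := H)).not.2 (not_or.2 ⟨h₁, h₂⟩)
  obtain ⟨hy₁, hy₂⟩ := not_or.1 hy
  have hT (b : Fin 7) : translation b ∈ H := hH ⟨b, rfl⟩
  set z : A₇ := translation (-y.1 0) * y with hz
  have hzH : z ∈ H := H.mul_mem (hT _) hyH
  have h_notMem {ε : Fin 7} (hy : y ∉ fanoAut ε) : z ∉ fanoAut ε :=
    ((fanoAut ε).mul_mem_cancel_left (translation_mem_fanoAut ε _)).not.2 hy
  have hz₀ : z.1 0 = 0 := by simp [hz, translation]
  obtain h | h | h | ⟨i, j, h⟩ := isFanoAut_or_linear_or_threeCycle hz₀ z.1.injective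
  · exact absurd h (h_notMem hy₁)
  · exact absurd h (h_notMem hy₂)
  · exact absurd (affine_mem_fanoAut (.inl rfl) fun k => by rw [add_zero, h k]) (h_notMem hy₁)
  · have hw : translation i * z * translation j * z ∈ H :=
      H.mul_mem (H.mul_mem (H.mul_mem (hT i) hzH) (hT j)) hzH
    refine ⟨_, H.mul_mem hw hw, card_support_eq_three_iff.1 (Eq.trans ?_ h)⟩
    rfl

lemma isPretransitive_of_translations_le {H : Subgroup A₇} (hH : translations ≤ H) :
    IsPretransitive (H.map (Subgroup.subtype A₇)) (Fin 7) :=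
  ⟨fun a b => ⟨⟨(translation (b - a)).1, _, hH ⟨_, rfl⟩, rfl⟩, by
    simp [translation, Subgroup.smul_def]⟩⟩

lemma fanoAut_ne_top {ε : Fin 7} (hε : ε = 1 ∨ ε = -1) : fanoAut ε ≠ ⊤ := by
  have h : ∃ g : A₇, ¬IsFanoAut 1 g ∧ ¬IsFanoAut (-1) g :=
    ⟨⟨swap 0 1 * swap 1 2, Perm.mem_alternatingGroup.2 (by decide)⟩, by decide⟩
  obtain ⟨g, h₁, h₂⟩ := h
  intro h_top
  have hg : g ∈ fanoAut ε := h_top ▸ mem_top g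
  obtain rfl | rfl := hε
  exacts [h₁ hg, h₂ hg]

lemma eq_top_iff_not_le_fanoAut {H : Subgroup A₇} (hH : translations ≤ H) :
    H = ⊤ ↔ ¬H ≤ fanoAut 1 ∧ ¬H ≤ fanoAut (-1) := by
  refine ⟨?_, fun ⟨h₁, h₂⟩ => ?_⟩
  · rintro rfl
    simp only [top_le_iff]
    exact ⟨fanoAut_ne_top (.inl rfl), fanoAut_ne_top (.inr rfl)⟩
  · obtain ⟨g, hg, hg₃⟩ := exists_isThreeCycle_mem hH h₁ h₂
    have := isPretransitive_of_translations_le hH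
    have h_prim := IsPreprimitive.of_prime_card (G := H.map (Subgroup.subtype A₇))
      (X := Fin 7) Fact.out
    have h_le := Perm.alternatingGroup_le_of_isPreprimitive_of_isThreeCycle_mem h_prim hg₃
      ⟨g, hg, rfl⟩
    rw [eq_top_iff, ← map_subtype_le_map_subtype]
    exact (map_subtype_le _).trans h_le

end Maximality

section Enumeration

/-- The number whose binary digit at `b < 2 ^ 7` is the digit of `b` at `i`: blocks of `2 ^ i` zeros
and of `2 ^ i` ones alternate. -/
def digitColumn (i : Fin 7) : ℕ := (2 ^ 2 ^ 7 - 1) / (2 ^ 2 ^ i.val + 1) * 2 ^ 2 ^ i.val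

/-- The family of the subsets of `Fin 7` which are not invariant under `f`. Both a subset and a
family of subsets are encoded by binary digits. -/
def noninvariantSets (f : Fin 7 → Fin 7) : ℕ :=
  (List.finRange 7).foldr (fun i m => (digitColumn (f i) ^^^ digitColumn i) ||| m) 0

lemma testBit_digitColumn (i : Fin 7) (b : ℕ) :
    (digitColumn i).testBit b = (decide (b < 128) && b.testBit i) := by
  have h_lt : ∀ (i : Fin 7) (b : Fin 128), (digitColumn i).testBit b = b.val.testBit i := by
    decide +kernel
  have h_ge : ∀ i, digitColumn i < 2 ^ 128 := by decide +kernel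
  obtain hb | hb := lt_or_ge b 128
  · simpa only [hb, decide_true, Bool.true_and] using h_lt i ⟨b, hb⟩
  · simpa only [hb.not_gt, decide_false, Bool.false_and] using Nat.testBit_lt_two_pow
      ((h_ge i).trans_le (Nat.pow_le_pow_right two_pos hb))

lemma testBit_foldr_lor {ι : Type*} (l : List ι) (h : ι → ℕ) (b : ℕ) :
    (l.foldr (fun i m => h i ||| m) 0).testBit b = true ↔ ∃ i ∈ l, (h i).testBit b = true := by
  induction l with
  | nil => simp
  | cons a l ih => simp [ih]

lemma testBit_noninvariantSets (f : Fin 7 → Fin 7) (b : ℕ) :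
    (noninvariantSets f).testBit b = true ↔
      b < 128 ∧ ¬∀ i, b.testBit (f i) = b.testBit i := by
  rw [noninvariantSets, testBit_foldr_lor]
  by_cases hb : b < 128 <;> simp only [Nat.testBit_xor, testBit_digitColumn, hb] <;> simp

lemma testBit_127 : ∀ i : Fin 7, Nat.testBit 127 i = true := by
  decide

lemma mem_transitivePairs_iff_forall_testBit {x y : A₇} :
    (x, y) ∈ transitivePairs A₇ (Fin 7) ↔ ∀ b < 128, (∀ i, b.testBit (x.1 i) = b.testBit i) →
      (∀ i, b.testBit (y.1 i) = b.testBit i) → b = 0 ∨ b = 127 := by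
  rw [mem_transitivePairs_iff_forall_invariant]
  constructor
  · intro h b hb hx hy
    have h_zero : ∀ b : Fin 128, (∀ i : Fin 7, b.val.testBit i = false) → b.val = 0 := by
      decide +kernel
    have h_ones : ∀ b : Fin 128, (∀ i : Fin 7, b.val.testBit i) → b.val = 127 := by
      decide +kernel
    refine (h {i : Fin 7 | b.testBit i} (fun i => ?_) fun i => ?_).imp (fun h => ?_) fun h => ?_
    · exact iff_of_eq (congrArg (· = true) (hx i))
    · exact iff_of_eq (congrArg (· = true) (hy i))
    · exact h_zero ⟨b, hb⟩ (by simpa [Set.eq_empty_iff_forall_notMem] using h)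
    · exact h_ones ⟨b, hb⟩ (by simpa [Set.eq_univ_iff_forall] using h)
  · intro h S hx hy
    classical
    have h_bit (i : Fin 7) : (Nat.ofBits fun i => decide (i ∈ S)).testBit i = decide (i ∈ S) :=
      Nat.testBit_ofBits_lt _ _ i.2
    refine (h (Nat.ofBits fun i => decide (i ∈ S)) (Nat.ofBits_lt_two_pow _) (fun i => ?_)
      fun i => ?_).imp (fun h => ?_) fun h => ?_
    · rw [h_bit, h_bit, decide_eq_decide]
      exact hx i
    · rw [h_bit, h_bit, decide_eq_decide]
      exact hy i
    · refine Set.eq_empty_iff_forall_notMem.2 fun i => ?_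
      simpa [h] using (h_bit i).symm
    · refine Set.eq_univ_iff_forall.2 fun i => ?_
      exact of_decide_eq_true ((h_bit i).symm.trans (h ▸ testBit_127 i))

lemma mem_transitivePairs_iff_lor_eq {x y : A₇} :
    (x, y) ∈ transitivePairs A₇ (Fin 7) ↔
      noninvariantSets x.1 ||| noninvariantSets y.1 = 2 ^ 127 - 2 := by
  have h_proper (b : ℕ) :
      (2 ^ 127 - 2).testBit b = true ↔ b < 128 ∧ ¬(b = 0 ∨ b = 127) := by
    have h_lt : ∀ b : Fin 128, (2 ^ 127 - 2).testBit b = true ↔ ¬(b.val = 0 ∨ b.val = 127) := by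
      decide +kernel
    obtain hb | hb := lt_or_ge b 128
    · exact (h_lt ⟨b, hb⟩).trans (and_iff_right hb).symm
    · have h_bound : 2 ^ 127 - 2 < 2 ^ b :=
        lt_of_lt_of_le (by norm_num) (Nat.pow_le_pow_right two_pos hb)
      rw [Nat.testBit_lt_two_pow h_bound]
      exact iff_of_false Bool.false_ne_true fun h => hb.not_gt h.1
  have h_trivial (b : ℕ) (hb : b = 0 ∨ b = 127) (i j : Fin 7) : b.testBit i = b.testBit j := by
    obtain rfl | rfl := hb
    · simp
    · rw [testBit_127, testBit_127]
  rw [mem_transitivePairs_iff_forall_testBit]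
  refine Iff.trans (forall_congr' fun b => ?_)
    ⟨Nat.eq_of_testBit_eq, fun h b => congrArg (·.testBit b) h⟩
  rw [Bool.eq_iff_iff, Nat.testBit_lor, Bool.or_eq_true, testBit_noninvariantSets,
    testBit_noninvariantSets, h_proper]
  specialize h_trivial b
  grind

/-- The permutations `f + k` for even permutations `f` with property `C` which fix `0`. -/
def elementList (C : (Fin 7 → Fin 7) → Prop) [DecidablePred C] : List (Fin 7 → Fin 7) :=
  (normalizedPerms.filter fun f => C f ∧ IsEven f).flatMap fun f =>
    (List.finRange 7).map fun k i => f i + k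

/-- The number of pairs of permutations in `l` that generate a transitive group, that is, the pairs
for which all subsets but `∅` and `Fin 7` fail to be invariant. -/
def countTransitivePairs (l : List (Fin 7 → Fin 7)) : ℕ :=
  let m := l.map noninvariantSets
  (m ×ˢ m).countP fun p => p.1 ||| p.2 = 2 ^ 127 - 2

lemma nodup_elementList (C : (Fin 7 → Fin 7) → Prop) [DecidablePred C] :
    (elementList C).Nodup := by
  have h_zero {f g : Fin 7 → Fin 7} {k l : Fin 7} (hf : f 0 = 0) (hg : g 0 = 0)
      (h : (fun i => f i + k) = fun i => g i + l) : k = l := by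
    simpa [hf, hg] using congrFun h 0
  refine List.nodup_flatMap.2 ⟨fun f _ => (List.nodup_finRange 7).map fun k l h => ?_,
    (nodup_normalizedPerms.filter _).imp_of_mem fun {f g} hf hg h_ne => ?_⟩
  · simpa using congrFun h 0
  · have hf₀ := (mem_normalizedPerms.1 (List.mem_of_mem_filter hf)).1
    have hg₀ := (mem_normalizedPerms.1 (List.mem_of_mem_filter hg)).1
    rw [Function.onFun, List.disjoint_left]
    simp only [List.mem_map, List.mem_finRange, true_and]
    rintro _ ⟨k, rfl⟩ ⟨l, h⟩
    obtain rfl := h_zero hg₀ hf₀ h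
    exact h_ne (funext fun i => (add_right_cancel (congrFun h i)).symm)

section EvenPermutations

variable {K : Subgroup A₇} {C : (Fin 7 → Fin 7) → Prop} [DecidablePred C]

lemma mem_elementList (hT : translations ≤ K) (hC : ∀ g : A₇, g ∈ K ↔ C g.1)
    {f : Fin 7 → Fin 7} : f ∈ elementList C ↔ ∃ g ∈ K, ⇑g.1 = f := by
  simp only [elementList, List.mem_flatMap, List.mem_filter, mem_normalizedPerms, List.mem_map,
    List.mem_finRange, true_and, decide_eq_true_eq]
  constructor
  · rintro ⟨f, ⟨⟨-, hf⟩, hfC, h_even⟩, k, rfl⟩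
    have hg : Equiv.ofBijective f (Finite.injective_iff_bijective.1 hf) ∈ A₇ :=
      mem_alternatingGroup_iff_isEven.2 h_even
    exact ⟨translation k * ⟨_, hg⟩, K.mul_mem (hT ⟨k, rfl⟩) ((hC _).2 hfC), rfl⟩
  · rintro ⟨g, hg, rfl⟩
    set h : A₇ := translation (-g.1 0) * g with hh
    have h_mem : h ∈ K := K.mul_mem (hT ⟨_, rfl⟩) hg
    refine ⟨h.1, ⟨⟨by simp [hh, translation], h.1.injective⟩, (hC h).1 h_mem,
      mem_alternatingGroup_iff_isEven.1 h.2⟩, g.1 0, funext fun i => ?_⟩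
    simp [hh, translation]

lemma map_product_map {ι κ α β : Type*} (f : ι → α) (g : κ → β) (l : List ι) (m : List κ) :
    l.map f ×ˢ m.map g = (l ×ˢ m).map (Prod.map f g) := by
  simp [SProd.sprod, List.product, List.flatMap_map, List.map_flatMap, Function.comp_def]

lemma coe_perm_injective : Function.Injective fun g : A₇ => (g.1 : Fin 7 → Fin 7) :=
  DFunLike.coe_injective.comp Subtype.val_injective

lemma natCard_eq_length_elementList (hT : translations ≤ K) (hC : ∀ g : A₇, g ∈ K ↔ C g.1) :
    Nat.card K = (elementList C).length := by
  rw [← List.toFinset_card_of_nodup (nodup_elementList C), ← Set.ncard_coe_finset,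
    ← SetLike.coe_sort_coe, Nat.card_coe_set_eq,
    ← Set.ncard_image_of_injective _ coe_perm_injective]
  congr 1
  ext f
  simp [mem_elementList hT hC]

lemma ncard_transitivePairsIn (hT : translations ≤ K) (hC : ∀ g : A₇, g ∈ K ↔ C g.1) :
    (transitivePairsIn (Fin 7) K).ncard = countTransitivePairs (elementList C) := by
  let φ : A₇ × A₇ → (Fin 7 → Fin 7) × (Fin 7 → Fin 7) := Prod.map (fun g => ⇑g.1) fun g => ⇑g.1
  have hφ : φ.Injective := coe_perm_injective.prodMap coe_perm_injective
  rw [countTransitivePairs, map_product_map, List.countP_map, List.countP_eq_length_filter,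
    ← List.toFinset_card_of_nodup
      (((nodup_elementList C).product (nodup_elementList C)).filter _),
    ← Set.ncard_coe_finset, ← Set.ncard_image_of_injective _ hφ]
  congr 1
  ext ⟨f, g⟩
  have h_le (q : A₇ × A₇) : closure {q.1, q.2} ≤ K ↔ q.1 ∈ K ∧ q.2 ∈ K := by
    rw [closure_le, Set.pair_subset_iff, SetLike.mem_coe, SetLike.mem_coe]
  simp only [transitivePairsIn, Set.mem_image, h_le, List.coe_toFinset,
    Set.mem_ofPred_eq, List.mem_filter, List.mem_product, mem_elementList hT hC]
  constructor
  · rintro ⟨⟨x, y⟩, ⟨h, hx, hy⟩, h_eq⟩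
    obtain ⟨rfl, rfl⟩ := Prod.mk.inj h_eq
    exact ⟨⟨⟨x, hx, rfl⟩, y, hy, rfl⟩, decide_eq_true (mem_transitivePairs_iff_lor_eq.1 h)⟩
  · rintro ⟨⟨⟨x, hx, rfl⟩, y, hy, rfl⟩, h⟩
    exact ⟨(x, y), ⟨mem_transitivePairs_iff_lor_eq.2 (of_decide_eq_true h), hx, hy⟩, rfl⟩

end EvenPermutations

end Enumeration

section Counting

lemma length_elementList_mul_ncard_transitivePairsConj {K : Subgroup A₇}
    {C : (Fin 7 → Fin 7) → Prop} [DecidablePred C]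
    (hK : normalizer (translations : Set A₇) ≤ K) (hC : ∀ g : A₇, g ∈ K ↔ C g.1) :
    (elementList C).length * (transitivePairsConj (Fin 7) K).ncard =
      2520 * countTransitivePairs (elementList C) := by
  have hT : translations ≤ K := le_normalizer.trans hK
  rw [← natCard_eq_length_elementList hT hC, ← ncard_transitivePairsIn hT hC,
    ← natCard_alternatingGroup_seven]
  exact card_mul_ncard_transitivePairsConj (P := translationsSylow)
    factorization_card_alternatingGroup_seven hK

set_option maxRecDepth 100000 in
lemma ncard_transitivePairsConj_fanoAut {ε : Fin 7} (hε : ε = 1 ∨ ε = -1) :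
    (transitivePairsConj (Fin 7) (fanoAut ε)).ncard = 333360 := by
  have h_count : (elementList (IsFanoAut ε)).length = 168 ∧
      countTransitivePairs (elementList (IsFanoAut ε)) = 22224 := by
    obtain rfl | rfl := hε <;> exact ⟨by decide +kernel, by decide +kernel⟩
  have h := length_elementList_mul_ncard_transitivePairsConj
    (C := IsFanoAut ε) (normalizer_translations_le_fanoAut hε) fun _ => Iff.rfl
  rw [h_count.1, h_count.2] at h
  lia

set_option maxRecDepth 100000 in
lemma ncard_transitivePairsConj_fanoAut_inf :
    (transitivePairsConj (Fin 7) (fanoAut 1 ⊓ fanoAut (-1))).ncard = 46080 := by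
  have h_count : (elementList fun f => IsFanoAut 1 f ∧ IsFanoAut (-1) f).length = 21 ∧
      countTransitivePairs (elementList fun f => IsFanoAut 1 f ∧ IsFanoAut (-1) f) = 384 := by
    exact ⟨by decide +kernel, by decide +kernel⟩
  have h := length_elementList_mul_ncard_transitivePairsConj
    (C := fun f => IsFanoAut 1 f ∧ IsFanoAut (-1) f) (le_inf
      (normalizer_translations_le_fanoAut (.inl rfl))
      (normalizer_translations_le_fanoAut (.inr rfl))) fun _ => Iff.rfl
  rw [h_count.1, h_count.2] at h
  lia

lemma ncard_generatingPairs_alternatingGroup_seven :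
    {q : A₇ × A₇ | closure {q.1, q.2} = ⊤}.ncard = 4616640 := by
  have := alternatingGroup.isPretransitive_of_three_le_card (Fin 7) (by simp)
  have h := ncard_setOf_closure_eq_top_add (α := Fin 7) (P := translationsSylow)
    factorization_card_alternatingGroup_seven
    (normalizer_translations_le_fanoAut (.inl rfl)) (normalizer_translations_le_fanoAut (.inr rfl))
    fun _ => eq_top_iff_not_le_fanoAut
  rw [ncard_transitivePairs_alternatingGroup_seven, ncard_transitivePairsConj_fanoAut (.inl rfl),
    ncard_transitivePairsConj_fanoAut (.inr rfl), ncard_transitivePairsConj_fanoAut_inf] at h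
  linarith only [h]

end Counting

/-- The probability that two random elements of `Alt(7)` generate it is `229/315`. -/
theorem stmt7 : genProb2 (alternatingGroup (Fin 7)) = 229 / 315 := by
  have h_pairs : Nat.card {v : alternatingGroup (Fin 7) × alternatingGroup (Fin 7) //
      closure {v.1, v.2} = ⊤} = 4616640 := ncard_generatingPairs_alternatingGroup_seven
  rw [genProb2, h_pairs, natCard_alternatingGroup_seven]
  norm_num
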